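/- There exists a constant c ∈ ℕ such that for every 2-VASS V = (Q,T) and every D ∈ ℕ, writing L = ([0,D]×ℕ) ∪ (ℕ×[0,D]) ⊆ ℕ², there exists a finite set Y_L of linear path schemes over V such that: (i) for all states p,q ∈ Q and all u,v ∈ L, if p(u) →*_L q(v) then p(u) →^{Y_L}_{ℕ²} q(v); (ii) every ρ ∈ Y_L has length at most (|Q| + ‖T‖ + D + 2)^c; and (iii) every ρ ∈ Y_L has at most two cycles. -/

import Mathlib

namespace VASS

/-- Integer vectors of dimension `d`. -/
abbrev Vec (d : ℕ) := Fin d → ℤ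

/-- A transition of a `d`-VASS: source state, update vector, target state. -/
abbrev Trans (d : ℕ) := ℕ × Vec d × ℕ

/-- The norm of a vector: maximum of absolute values of its components. -/
def vnorm {d : ℕ} (z : Vec d) : ℕ := Finset.univ.sup fun i => (z i).natAbs

/-- The norm of a transition set. -/
def tnorm {d : ℕ} (T : Finset (Trans d)) : ℕ := T.sup fun t => vnorm t.2.1

/-- The displacement of a word of transitions. -/
def disp {d : ℕ} (π : List (Trans d)) : Vec d := (π.map fun t => t.2.1).sum

/-- `IsPathFrom p q π` : `π` is a path from `p` to `q`. -/
def IsPathFrom {d : ℕ} : ℕ → ℕ → List (Trans d) → Prop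
  | p, q, [] => p = q
  | p, q, t :: rest => t.1 = p ∧ IsPathFrom t.2.2 q rest

/-- ℕ^d as a subset of ℤ^d. -/
def NatSet (d : ℕ) : Set (Vec d) := {v | ∀ i, 0 ≤ v i}

/-- `p(u) →^π_A q(v)`. -/
def Run {d : ℕ} (T : Finset (Trans d)) (A : Set (Vec d)) (p : ℕ) (u : Vec d)
    (q : ℕ) (v : Vec d) (π : List (Trans d)) : Prop :=
  (∀ t ∈ π, t ∈ T) ∧ IsPathFrom p q π ∧ u ∈ A ∧ v = u + disp π ∧
    ∀ i, 1 ≤ i → i ≤ π.length → u + disp (π.take i) ∈ A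

/-- `p(u) →*_A q(v)`. -/
def Reach {d : ℕ} (T : Finset (Trans d)) (A : Set (Vec d)) (p : ℕ) (u : Vec d)
    (q : ℕ) (v : Vec d) : Prop := ∃ π, Run T A p u q v π

/-- A linear path scheme `α₀ β₁* α₁ ⋯ β_k* α_k`, presented as the initial
segment `α₀` together with the list of pairs `(βᵢ, αᵢ)`. -/
abbrev LPS (d : ℕ) := List (Trans d) × List (List (Trans d) × List (Trans d))

/-- The underlying word `α₀ β₁ α₁ ⋯ β_k α_k` of a linear path scheme. -/
def lpsSupport {d : ℕ} (ρ : LPS d) : List (Trans d) :=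
  ρ.1 ++ (ρ.2.map fun s => s.1 ++ s.2).flatten

/-- The length of a linear path scheme. -/
def lpsLen {d : ℕ} (ρ : LPS d) : ℕ := (lpsSupport ρ).length

/-- The number of cycles of a linear path scheme. -/
def numCycles {d : ℕ} (ρ : LPS d) : ℕ := ρ.2.length

/-- `ρ` is a linear path scheme from `p` to `q` over the transition set `T`:
its underlying word uses transitions from `T` and is a path from `p` to `q`,
and each `βᵢ` is a cycle. -/
def IsLPSFrom {d : ℕ} (T : Finset (Trans d)) (p q : ℕ) (ρ : LPS d) : Prop :=
  (∀ t ∈ lpsSupport ρ, t ∈ T) ∧ IsPathFrom p q (lpsSupport ρ) ∧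
    ∀ s ∈ ρ.2, s.1 ≠ [] ∧ ∃ r, IsPathFrom r r s.1

/-- The word `α₀ β₁^{e₁} α₁ ⋯ β_k^{e_k} α_k` of a linear path scheme. -/
def lpsWord {d : ℕ} (ρ : LPS d) (e : List ℕ) : List (Trans d) :=
  ρ.1 ++ (List.zipWith (fun s n => (List.replicate n s.1).flatten ++ s.2) ρ.2 e).flatten

/-- Membership in the language of a linear path scheme. -/
def InLang {d : ℕ} (ρ : LPS d) (π : List (Trans d)) : Prop :=
  ∃ e : List ℕ, e.length = numCycles ρ ∧ π = lpsWord ρ e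

/-- `p(u) →^S_A q(v)` for a finite set `S` of linear path schemes. -/
def SReach {d : ℕ} (T : Finset (Trans d)) (S : Finset (LPS d)) (A : Set (Vec d))
    (p : ℕ) (u : Vec d) (q : ℕ) (v : Vec d) : Prop :=
  ∃ ρ ∈ S, ∃ π, InLang ρ π ∧ Run T A p u q v π

/-- δ(ρ): the set of displacements of words in the language of `ρ`. -/
def DispSet {d : ℕ} (ρ : LPS d) : Set (Vec d) := {z | ∃ π, InLang ρ π ∧ z = disp π}

/-- A quadrant of ℤ². -/
def IsQuadrant (Z : Set (Vec 2)) : Prop :=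
  ∃ ε : Fin 2 → Bool, Z = {v | ∀ i, if ε i then 0 ≤ v i else v i ≤ 0}

/-- A linear path scheme is zigzag-free if the displacements of all its cycles
lie in a single quadrant. -/
def ZigzagFree (ρ : LPS 2) : Prop :=
  ∃ Z, IsQuadrant Z ∧ ∀ s ∈ ρ.2, disp s.1 ∈ Z

/-- The L-shaped band `L = ([0,D]×ℕ) ∪ (ℕ×[0,D])` as a subset of ℤ². -/
def LBand (D : ℕ) : Set (Vec 2) :=
  {v | (∀ i, 0 ≤ v i) ∧ (v 0 ≤ (D : ℤ) ∨ v 1 ≤ (D : ℤ))}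

/-!
Far out along an arm of `L` only one coordinate is unbounded, so there the VASS is a one-counter
system whose states remember the other coordinate, and it moves between the arms only through a
box of polynomial size.

In a one-counter system with updates bounded by `M`, the relation "connected with the counter kept
in `[0, nM]`" between configurations with counter below `M` is determined, level by level, by the
relation one level down. Hence it stabilises after as many levels as there are pairs of such
configurations, and low configurations are connected by polynomially short paths. A path descending
to its minimum is therefore a sequence of short drops, a path in a finite graph whose edges carry
weights in `[1, M]`, and as in Chrobak's normal form it can be replaced by one of the same weight
that uses a single pumped cycle. Ascending paths are reversed descending ones.

A run inside one arm descends to its minimum and ascends from it: two cycles. A run meeting the box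
needs one cycle before its first visit and one after its last; between these visits it jumps between
box configurations along short paths, and no configuration of the box has to be visited twice.
-/

/-! ### Paths in labelled transition systems -/

/-- `PathIn step S a l b`: the word `l` labels a path from `a` to `b` of the labelled transition
system `step`, all of whose vertices, endpoints included, lie in `S`. -/
def PathIn {V E : Type*} (step : V → E → V → Prop) (S : Set V) : V → List E → V → Prop
  | a, [], b => a = b ∧ a ∈ S
  | a, e :: l, b => a ∈ S ∧ ∃ c, step a e c ∧ PathIn step S c l b

namespace PathIn

variable {V E : Type*} {step : V → E → V → Prop} {S : Set V} {a b c : V} {e : E} {l l' : List E}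

theorem refl (ha : a ∈ S) : PathIn step S a [] a := ⟨rfl, ha⟩

theorem cons (ha : a ∈ S) (he : step a e c) (hl : PathIn step S c l b) :
    PathIn step S a (e :: l) b := ⟨ha, c, he, hl⟩

theorem source_mem (h : PathIn step S a l b) : a ∈ S := by
  cases l with
  | nil => exact h.2
  | cons e l => exact h.1

theorem target_mem (h : PathIn step S a l b) : b ∈ S := by
  induction l generalizing a with
  | nil => exact h.1 ▸ h.2
  | cons e l ih =>
    obtain ⟨-, c, -, hl⟩ := h
    exact ih hl

theorem append (h : PathIn step S a l b) (h' : PathIn step S b l' c) :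
    PathIn step S a (l ++ l') c := by
  induction l generalizing a with
  | nil =>
    obtain ⟨rfl, -⟩ := h
    exact h'
  | cons e l ih =>
    obtain ⟨ha, d, he, hl⟩ := h
    exact cons ha he (ih hl)

theorem concat (h : PathIn step S a l b) (he : step b e c) (hc : c ∈ S) :
    PathIn step S a (l ++ [e]) c :=
  h.append (cons h.target_mem he (refl hc))

theorem map {V' : Type*} {step' : V' → E → V' → Prop} {S' : Set V'} (f : V → V')
    (hS : ∀ x ∈ S, f x ∈ S') (hstep : ∀ x e y, step x e y → step' (f x) e (f y))
    (h : PathIn step S a l b) : PathIn step' S' (f a) l (f b) := by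
  induction l generalizing a with
  | nil => exact ⟨congrArg f h.1, hS _ h.2⟩
  | cons e l ih =>
    obtain ⟨ha, c, he, hl⟩ := h
    exact cons (hS _ ha) (hstep _ _ _ he) (ih hl)

theorem mono {S' : Set V} (h : PathIn step S a l b) (hS : S ⊆ S') : PathIn step S' a l b :=
  h.map id hS fun _ _ _ => id

theorem reverse (h : PathIn step S a l b) :
    PathIn (fun x e y => step y e x) S b l.reverse a := by
  induction l generalizing a with
  | nil =>
    obtain ⟨rfl, ha⟩ := h
    exact refl ha
  | cons e l ih =>
    obtain ⟨ha, c, he, hl⟩ := h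
    rw [List.reverse_cons]
    exact (ih hl).concat he ha

theorem exists_step_of_mem (h : PathIn step S a l b) (he : e ∈ l) : ∃ x y, step x e y := by
  induction l generalizing a with
  | nil => simp at he
  | cons e' l ih =>
    obtain ⟨-, c, he', hl⟩ := h
    rcases List.mem_cons.mp he with rfl | he
    · exact ⟨a, c, he'⟩
    · exact ih hl he

theorem inter_of_invariant {P : Set V} (hP : ∀ x e y, step x e y → y ∈ P) (ha : a ∈ P)
    (h : PathIn step S a l b) : PathIn step (S ∩ P) a l b := by
  induction l generalizing a with
  | nil => exact ⟨h.1, h.2, ha⟩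
  | cons e l ih =>
    obtain ⟨haS, c, he, hl⟩ := h
    exact cons ⟨haS, ha⟩ he (ih (hP _ _ _ he) hl)

theorem inter_or_exists_first_exit {P : Set V} (ha : a ∈ P) (h : PathIn step S a l b) :
    PathIn step (S ∩ P) a l b ∨ ∃ l₁ e l₂ x y, l = l₁ ++ e :: l₂ ∧
      PathIn step (S ∩ P) a l₁ x ∧ step x e y ∧ y ∉ P ∧ PathIn step S y l₂ b := by
  induction l generalizing a with
  | nil => exact .inl ⟨h.1, h.2, ha⟩
  | cons e l ih =>
    obtain ⟨haS, c, he, hl⟩ := h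
    by_cases hc : c ∈ P
    · rcases ih hc hl with hl | ⟨l₁, e', l₂, x, y, rfl, h₁, he', hy, h₂⟩
      · exact .inl (cons ⟨haS, ha⟩ he hl)
      · exact .inr ⟨e :: l₁, e', l₂, x, y, rfl, cons ⟨haS, ha⟩ he h₁, he', hy, h₂⟩
    · exact .inr ⟨[], e, l, a, c, rfl, refl ⟨haS, ha⟩, he, hc, hl⟩

theorem avoids_or_visits (x : V) (h : PathIn step S a l b) :
    PathIn step (S \ {x}) a l b ∨
      ∃ l₁ l₂, l = l₁ ++ l₂ ∧ PathIn step S a l₁ x ∧ PathIn step S x l₂ b := by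
  rcases eq_or_ne a x with rfl | hax
  · exact .inr ⟨[], l, rfl, refl h.source_mem, h⟩
  · rcases h.inter_or_exists_first_exit (P := {x}ᶜ) hax with
      h | ⟨l₁, e, l₂, y, x', rfl, h₁, he, hx', h₂⟩
    · exact .inl h
    · obtain rfl : x' = x := not_not.mp hx'
      exact .inr ⟨l₁ ++ [e], l₂, by simp,
        (h₁.mono Set.inter_subset_left).concat he h₂.source_mem, h₂⟩

theorem exists_lowest_vertex {α : Type*} [LinearOrder α] (height : V → α)
    (h : PathIn step S a l b) :
    ∃ l₁ l₂ c, PathIn step (S ∩ {x | height c ≤ height x}) a l₁ c ∧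
      PathIn step (S ∩ {x | height c ≤ height x}) c l₂ b ∧ l = l₁ ++ l₂ := by
  induction l generalizing a with
  | nil =>
    obtain ⟨rfl, ha⟩ := h
    exact ⟨[], [], a, refl ⟨ha, le_rfl⟩, refl ⟨ha, le_rfl⟩, rfl⟩
  | cons e l ih =>
    obtain ⟨ha, d, he, hl⟩ := h
    obtain ⟨l₁, l₂, c, h₁, h₂, rfl⟩ := ih hl
    rcases le_or_gt (height c) (height a) with hca | hac
    · exact ⟨e :: l₁, l₂, c, cons ⟨ha, hca⟩ he h₁, h₂, rfl⟩
    · have hsub : S ∩ {x | height c ≤ height x} ⊆ S ∩ {x | height a ≤ height x} :=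
        fun x hx => ⟨hx.1, hac.le.trans hx.2⟩
      exact ⟨[], e :: (l₁ ++ l₂), a, refl ⟨ha, le_rfl⟩,
        cons ⟨ha, le_rfl⟩ he ((h₁.append h₂).mono hsub), rfl⟩

theorem length_lt_card_or_exists_cycle {F : Finset V} (hS : S ⊆ F) (h : PathIn step S a l b) :
    l.length < F.card ∨ ∃ l₁ β l₂ z, l = l₁ ++ β ++ l₂ ∧ β ≠ [] ∧
      PathIn step S a l₁ z ∧ PathIn step S z β z ∧ PathIn step S z l₂ b := by
  classical
  induction l generalizing a S F with
  | nil => exact .inl (Finset.card_pos.mpr ⟨a, hS h.source_mem⟩)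
  | cons e l ih =>
    obtain ⟨ha, c, he, hl⟩ := h
    rcases hl.avoids_or_visits a with hl | ⟨l₁, l₂, rfl, h₁, h₂⟩
    · have hsub : S \ {a} ⊆ (F.erase a : Finset V) := by
        rw [Finset.coe_erase]
        exact Set.sdiff_subset_sdiff_left hS
      rcases ih hsub hl with hlen | ⟨l₁, β, l₂, z, rfl, hβ, h₁, hz, h₂⟩
      · rw [Finset.card_erase_of_mem (hS ha)] at hlen
        exact .inl (by rw [List.length_cons]; omega)
      · have hsub' : S \ {a} ⊆ S := Set.sdiff_subset
        exact .inr ⟨e :: l₁, β, l₂, z, rfl, hβ, cons ha he (h₁.mono hsub'), hz.mono hsub',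
          h₂.mono hsub'⟩
    · exact .inr ⟨[], e :: l₁, l₂, a, rfl, List.cons_ne_nil _ _, refl ha, cons ha he h₁, h₂⟩

theorem exists_sublist_length_lt_card {F : Finset V} (hS : S ⊆ F) (h : PathIn step S a l b) :
    ∃ l', l'.Sublist l ∧ PathIn step S a l' b ∧ l'.length < F.card := by
  induction hn : l.length using Nat.strong_induction_on generalizing l with
  | _ n ih =>
    rcases h.length_lt_card_or_exists_cycle hS with hlen | ⟨l₁, β, l₂, z, rfl, hβ, h₁, -, h₂⟩
    · exact ⟨l, .refl l, h, hlen⟩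
    · have hβ_pos : 0 < β.length := List.length_pos_iff.mpr hβ
      have hshorter : (l₁ ++ l₂).length < n := by simp only [List.length_append] at hn ⊢; omega
      obtain ⟨l', hsub, hl', hlen⟩ := ih _ hshorter (h₁.append h₂) rfl
      exact ⟨l', hsub.trans ((List.sublist_append_left l₁ β).append_right l₂), hl', hlen⟩

theorem length_lt_card_or_exists_short_cycle {F : Finset V} (hS : S ⊆ F)
    (h : PathIn step S a l b) :
    l.length < F.card ∨ ∃ l₁ l₂ z β, l = l₁ ++ l₂ ∧ PathIn step S a l₁ z ∧
      PathIn step S z l₂ b ∧ PathIn step S z β z ∧ β ≠ [] ∧ β.length ≤ F.card := by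
  refine (h.length_lt_card_or_exists_cycle hS).imp_right ?_
  rintro ⟨l₁, β, l₂, z, rfl, hβ, h₁, hz, h₂⟩
  obtain ⟨e, β, rfl⟩ := List.exists_cons_of_ne_nil hβ
  obtain ⟨hzS, c, he, hβ'⟩ := id hz
  obtain ⟨β', -, hβ'_path, hlen⟩ := hβ'.exists_sublist_length_lt_card hS
  exact ⟨l₁, (e :: β) ++ l₂, z, e :: β', List.append_assoc _ _ _, h₁, hz.append h₂,
    cons hzS he hβ'_path, List.cons_ne_nil _ _, hlen⟩

theorem flatten_of_bounded_steps {S' : Set V} {K : ℕ} {L : List (List E)} (hS : S' ⊆ S)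
    (h : PathIn (fun x l y => PathIn step S x l y ∧ l.length ≤ K) S' a L b) :
    PathIn step S a L.flatten b ∧ L.flatten.length ≤ L.length * K := by
  induction L generalizing a with
  | nil => exact ⟨⟨h.1, hS h.2⟩, Nat.zero_le _⟩
  | cons l L ih =>
    obtain ⟨-, c, ⟨hl, hlK⟩, hL⟩ := h
    obtain ⟨hL_path, hL_len⟩ := ih hL
    refine ⟨hl.append hL_path, ?_⟩
    rw [List.flatten_cons, List.length_append, List.length_cons, Nat.succ_mul]
    omega

end PathIn

theorem pathIn_equiv_iff {V V' E : Type*} {step : V → E → V → Prop} {step' : V' → E → V' → Prop}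
    (f : V ≃ V') (hstep : ∀ x e y, step' (f x) e (f y) ↔ step x e y) {S : Set V'} {a b : V}
    {l : List E} : PathIn step' S (f a) l (f b) ↔ PathIn step (f ⁻¹' S) a l b := by
  refine ⟨fun h => ?_, PathIn.map f (fun _ => id) fun x e y => (hstep x e y).mpr⟩
  simpa using h.map (S' := f ⁻¹' S) f.symm (by simp) fun x e y he => (hstep _ _ _).mp (by simpa)

/-! ### Systems with a counter -/

/-- The system `step` equipped with a counter in `G`, to which reading the label `e` adds
`eff e`. Iterating it adds several counters. -/
def counterStep {σ E G : Type*} [Add G] (step : σ → E → σ → Prop) (eff : E → G)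
    (x : σ × G) (e : E) (y : σ × G) : Prop :=
  step x.1 e y.1 ∧ y.2 = x.2 + eff e

section CounterStep

variable {σ E G : Type*} {step : σ → E → σ → Prop} {eff : E → G} {l : List E}

theorem PathIn.forget_counter [Add G] {S : Set (σ × G)} {S' : Set σ} {x y : σ × G}
    (h : PathIn (counterStep step eff) S x l y) (hS : ∀ z ∈ S, z.1 ∈ S') :
    PathIn step S' x.1 l y.1 :=
  h.map Prod.fst hS fun _ _ _ he => he.1

theorem PathIn.counter_eq [AddMonoid G] {S : Set (σ × G)} {x y : σ × G}
    (h : PathIn (counterStep step eff) S x l y) : y.2 = x.2 + (l.map eff).sum := by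
  induction l generalizing x with
  | nil => rw [h.1, List.map_nil, List.sum_nil, add_zero]
  | cons e l ih =>
    obtain ⟨-, z, he, hl⟩ := h
    rw [ih hl, he.2, List.map_cons, List.sum_cons, add_assoc]

theorem PathIn.add_counter [AddMonoid G] {S : Set σ} {a b : σ} (eff : E → G) (r : G)
    (h : PathIn step S a l b) :
    PathIn (counterStep step eff) (S ×ˢ Set.univ) (a, r) l (b, r + (l.map eff).sum) := by
  induction l generalizing a r with
  | nil =>
    obtain ⟨rfl, ha⟩ := h
    rw [List.map_nil, List.sum_nil, add_zero]
    exact .refl ⟨ha, trivial⟩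
  | cons e l ih =>
    obtain ⟨ha, c, he, hl⟩ := h
    rw [List.map_cons, List.sum_cons, ← add_assoc]
    exact .cons ⟨ha, trivial⟩ ⟨he, rfl⟩ (ih (r + eff e) hl)

theorem PathIn.shift [AddCommSemigroup G] {S S' : Set (σ × G)} {a b : σ} {m n m' n' : G}
    (h : PathIn (counterStep step eff) S (a, m) l (b, n)) (k : G)
    (hS : ∀ z ∈ S, (z.1, z.2 + k) ∈ S') (hm : m + k = m') (hn : n + k = n') :
    PathIn (counterStep step eff) S' (a, m') l (b, n') := by
  subst hm hn
  exact PathIn.map (fun z : σ × G => (z.1, z.2 + k)) hS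
    (fun z e z' he => ⟨he.1, by simp only [he.2, add_right_comm]⟩) h

theorem PathIn.reverse_counter [AddGroup G] {S : Set (σ × G)} {x y : σ × G}
    (h : PathIn (counterStep step eff) S x l y) :
    PathIn (counterStep (fun a e b => step b e a) fun e => -eff e) S y l.reverse x :=
  h.reverse.map id (fun _ => id) fun _ _ _ he => ⟨he.1, eq_add_neg_of_add_eq he.2.symm⟩

end CounterStep

/-! ### Weights of paths in a finite graph -/

section Weights

variable {V E : Type*} {step : V → E → V → Prop} {S : Set V} {F : Finset V} {a b : V}
  {l : List E} {w : E → ℕ}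

-- A repetition-free path in the product of the graph with `ℤ/d` keeps the weight modulo `d`.
theorem PathIn.exists_short_of_weight_modEq (hS : S ⊆ F) (w : E → ℕ) {d : ℕ} (hd : 0 < d)
    (h : PathIn step S a l b) :
    ∃ l' k, PathIn step S a l' b ∧ l'.length < F.card * d ∧
      (l.map w).sum = (l'.map w).sum + k * d := by
  have : NeZero d := ⟨hd.ne'⟩
  have hfin : S ×ˢ (Set.univ : Set (ZMod d)) ⊆ (F ×ˢ Finset.univ : Finset (V × ZMod d)) := by
    rw [Finset.coe_product, Finset.coe_univ]
    exact Set.prod_mono_left hS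
  obtain ⟨l', hsub, hl', hlen⟩ :=
    (h.add_counter (fun e => (w e : ZMod d)) 0).exists_sublist_length_lt_card hfin
  have hcast (l : List E) : (l.map fun e => (w e : ZMod d)).sum = ((l.map w).sum : ℕ) := by
    rw [Nat.cast_list_sum, List.map_map]
    rfl
  have hmod : (l'.map w).sum ≡ (l.map w).sum [MOD d] := by
    have := hl'.counter_eq
    simp only [hcast, zero_add] at this
    exact ((ZMod.natCast_eq_natCast_iff _ _ _).mp this).symm
  have hle : (l'.map w).sum ≤ (l.map w).sum :=
    (hsub.map w).sum_le_sum fun _ _ => Nat.zero_le _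
  obtain ⟨k, hk⟩ := (Nat.modEq_iff_dvd' hle).mp hmod
  refine ⟨l', k, hl'.forget_counter fun _ hz => hz.1, ?_, ?_⟩
  · rwa [Finset.card_product, Finset.card_univ, ZMod.card] at hlen
  · rw [mul_comm k]
    omega

theorem PathIn.weight_le {M : ℕ} (hw : ∀ x e y, step x e y → w e ≤ M) (h : PathIn step S a l b) :
    (l.map w).sum ≤ l.length * M := by
  have hle : ∀ n ∈ l.map w, n ≤ M := by
    simp only [List.forall_mem_map]
    intro e he
    obtain ⟨x, y, hstep⟩ := h.exists_step_of_mem he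
    exact hw x e y hstep
  simpa using List.sum_le_card_nsmul _ M hle

theorem PathIn.weight_pos (hw : ∀ x e y, step x e y → 0 < w e) (hl : l ≠ [])
    (h : PathIn step S a l b) : 0 < (l.map w).sum := by
  obtain ⟨e, l, rfl⟩ := List.exists_cons_of_ne_nil hl
  obtain ⟨-, c, he, -⟩ := h
  rw [List.map_cons, List.sum_cons]
  have := hw _ _ _ he
  omega

-- As in the Chrobak normal form of unary automata: both sides of a visit to a short cycle
-- are shortened modulo the weight of that cycle, and the weight lost is pumped back.
theorem PathIn.exists_one_cycle_of_same_weight (hS : S ⊆ F) {M : ℕ}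
    (hw : ∀ x e y, step x e y → 0 < w e ∧ w e ≤ M) (h : PathIn step S a l b) :
    ∃ z l₁ β l₂ k, PathIn step S a l₁ z ∧ PathIn step S z β z ∧ PathIn step S z l₂ b ∧
      l₁.length ≤ F.card * (F.card * M + 1) ∧ β.length ≤ F.card * (F.card * M + 1) ∧
      l₂.length ≤ F.card * (F.card * M + 1) ∧
      (l.map w).sum = (l₁.map w).sum + k * (β.map w).sum + (l₂.map w).sum := by
  have hcard : F.card ≤ F.card * (F.card * M + 1) := Nat.le_mul_of_pos_right _ (Nat.succ_pos _)
  rcases h.length_lt_card_or_exists_short_cycle hS with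
    hlen | ⟨l₁, l₂, z, β, rfl, h₁, h₂, hz, hβ, hβ_len⟩
  · exact ⟨a, [], [], l, 0, .refl h.source_mem, .refl h.source_mem, h, Nat.zero_le _,
      Nat.zero_le _, by omega, by simp⟩
  · have hβ_pos : 0 < (β.map w).sum := hz.weight_pos (fun x e y he => (hw x e y he).1) hβ
    have hβ_le : (β.map w).sum ≤ F.card * M :=
      (hz.weight_le fun x e y he => (hw x e y he).2).trans (Nat.mul_le_mul_right M hβ_len)
    have hbound : F.card * (β.map w).sum ≤ F.card * (F.card * M + 1) :=
      Nat.mul_le_mul_left _ (hβ_le.trans (Nat.le_succ _))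
    obtain ⟨l₁', k₁, h₁', hlen₁, hsum₁⟩ := h₁.exists_short_of_weight_modEq hS w hβ_pos
    obtain ⟨l₂', k₂, h₂', hlen₂, hsum₂⟩ := h₂.exists_short_of_weight_modEq hS w hβ_pos
    refine ⟨z, l₁', β, l₂', k₁ + k₂, h₁', hz, h₂', by omega, by omega, by omega, ?_⟩
    rw [List.map_append, List.sum_append, hsum₁, hsum₂]
    ring

end Weights

/-! ### One-counter systems: paths between low configurations -/

section LowPaths

variable {σ E : Type*} {step : σ → E → σ → Prop} {eff : E → ℤ} {S : Set σ} {M : ℕ}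

/-- The pairs of configurations with counter below `M` that are linked by a path along which the
counter stays in `[0, H]`. -/
def lowPairs (step : σ → E → σ → Prop) (eff : E → ℤ) (S : Set σ) (M : ℕ) (H : ℤ) :
    Set ((σ × ℤ) × σ × ℤ) :=
  {xy | xy.1.2 < M ∧ xy.2.2 < M ∧
    ∃ l, PathIn (counterStep step eff) (S ×ˢ Set.Icc 0 H) xy.1 l xy.2}

theorem lowPairs_mono {H H' : ℤ} (hH : H ≤ H') :
    lowPairs step eff S M H ⊆ lowPairs step eff S M H' :=
  fun _ ⟨hx, hy, l, hl⟩ =>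
    ⟨hx, hy, l, hl.mono (Set.prod_mono_right (Set.Icc_subset_Icc_right hH))⟩

theorem lowPairs_subset_product (St : Finset σ) (H : ℤ) :
    lowPairs step eff St M H ⊆
      ((St ×ˢ Finset.Ico (0 : ℤ) M) ×ˢ (St ×ˢ Finset.Ico (0 : ℤ) M) :
        Finset ((σ × ℤ) × σ × ℤ)) := by
  rintro ⟨x, y⟩ ⟨hx, hy, l, hl⟩
  have hx' := hl.source_mem
  have hy' := hl.target_mem
  simp only [Finset.mem_coe, Finset.mem_product, Finset.mem_Ico]
  exact ⟨⟨hx'.1, hx'.2.1, hx⟩, hy'.1, hy'.2.1, hy⟩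

theorem ncard_lowPairs_le (St : Finset σ) (H : ℤ) :
    (lowPairs step eff St M H).ncard ≤ (St.card * M) ^ 2 := by
  refine (Set.ncard_le_ncard (lowPairs_subset_product St H) (Finset.finite_toSet _)).trans ?_
  rw [Set.ncard_coe_finset]
  simp [sq]

theorem counterStep_le (heff : ∀ a e b, step a e b → |eff e| ≤ M) {x y : σ × ℤ} {e : E}
    (h : counterStep step eff x e y) :
    y.2 ≤ x.2 + M ∧ x.2 ≤ y.2 + M := by
  have := abs_le.mp (heff _ _ _ h.1)
  have := h.2
  omega

-- An excursion above `M`, lowered by `M`, is again a path between low configurations.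
theorem exists_path_of_lowPairs_subset (heff : ∀ a e b, step a e b → |eff e| ≤ M)
    {H H' : ℤ} (hH' : 0 ≤ H')
    (hsub : lowPairs step eff S M H ⊆ lowPairs step eff S M H') {l : List E} {x y : σ × ℤ}
    (hx : x.2 < M) (hy : y.2 < M)
    (h : PathIn (counterStep step eff) (S ×ˢ Set.Icc 0 (H + M)) x l y) :
    ∃ l', PathIn (counterStep step eff) (S ×ˢ Set.Icc 0 (H' + M)) x l' y := by
  induction hn : l.length using Nat.strong_induction_on generalizing l x with
  | _ n ih =>
    subst hn
    have hx_mem : x ∈ S ×ˢ Set.Icc (0 : ℤ) (H' + M) :=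
      ⟨h.source_mem.1, h.source_mem.2.1, by omega⟩
    cases l with
    | nil => exact ⟨[], h.1, hx_mem⟩
    | cons e l =>
      obtain ⟨-, c, he, hl⟩ := h
      rcases lt_or_ge c.2 M with hc | hc
      · obtain ⟨l', hl'⟩ := ih l.length (by simp) hc hl rfl
        exact ⟨e :: l', .cons hx_mem he hl'⟩
      rcases hl.inter_or_exists_first_exit (P := {z | (M : ℤ) ≤ z.2}) hc with
        hl | ⟨l₁, e', l₂, c', x', rfl, h₁, he', hx', h₂⟩
      · exact absurd hl.target_mem.2 hy.not_ge
      have hx'_low : x'.2 < M := not_le.mp hx'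
      have hexcursion : ((c.1, c.2 - M), (c'.1, c'.2 - M)) ∈ lowPairs step eff S M H := by
        have := counterStep_le heff he
        have := counterStep_le heff he'
        refine ⟨by dsimp only; omega, by dsimp only; omega, l₁, h₁.shift (-M) ?_ rfl rfl⟩
        rintro z ⟨⟨hz, -, hzH⟩, hzM⟩
        exact ⟨hz, by simpa using hzM, by simpa using hzH⟩
      obtain ⟨-, -, l₁', h₁'⟩ := hsub hexcursion
      have hshorter : l₂.length < (e :: (l₁ ++ e' :: l₂)).length := by
        simp only [List.length_cons, List.length_append]
        omega
      obtain ⟨l₂', h₂'⟩ := ih _ hshorter hx'_low h₂ rfl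
      have hup : PathIn (counterStep step eff) (S ×ˢ Set.Icc 0 (H' + M)) c l₁' c' := by
        refine h₁'.shift M ?_ (sub_add_cancel _ _) (sub_add_cancel _ _)
        rintro z ⟨hz, hz0, hzH⟩
        exact ⟨hz, by dsimp only; omega, by dsimp only; omega⟩
      exact ⟨e :: (l₁' ++ e' :: l₂'), .cons hx_mem he (hup.append (.cons hup.target_mem he' h₂'))⟩

theorem lowPairs_add_subset (heff : ∀ a e b, step a e b → |eff e| ≤ M) {H H' : ℤ} (hH' : 0 ≤ H')
    (hsub : lowPairs step eff S M H ⊆ lowPairs step eff S M H') :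
    lowPairs step eff S M (H + M) ⊆ lowPairs step eff S M (H' + M) :=
  fun _ ⟨hx, hy, _, hl⟩ => ⟨hx, hy, exists_path_of_lowPairs_subset heff hH' hsub hx hy hl⟩

theorem lowPairs_stabilise (heff : ∀ a e b, step a e b → |eff e| ≤ M) (St : Finset σ) {n : ℕ}
    (hn : (St.card * M) ^ 2 ≤ n) :
    lowPairs step eff St M (n * M) = lowPairs step eff St M (((St.card * M) ^ 2 : ℕ) * M) := by
  have hmono : Monotone fun n : ℕ => lowPairs step eff (St : Set σ) M (n * M) := by
    intro m n hmn
    exact lowPairs_mono (by gcongr)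
  have hfin (H : ℤ) : (lowPairs step eff (St : Set σ) M H).Finite :=
    (Finset.finite_toSet _).subset (lowPairs_subset_product St H)
  refine (Set.eq_of_subset_of_ncard_le (hmono hn) ?_ (hfin _)).symm
  refine (Nat.stabilises_of_monotone (f := fun n => (lowPairs step eff St M (n * M)).ncard)
    (fun m n hmn => Set.ncard_le_ncard (hmono hmn) (hfin _)) (fun m => ncard_lowPairs_le St _)
    (fun m hm => ?_) hn).le
  have heq := Set.eq_of_subset_of_ncard_le (hmono m.le_succ) hm.ge (hfin _)
  have hsub := lowPairs_add_subset heff (H := (m + 1 : ℕ) * M) (H' := m * M) (by positivity) heq.ge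
  refine (Set.ncard_le_ncard (hmono (m + 1).le_succ) (hfin _)).antisymm
    (Set.ncard_le_ncard ?_ (hfin _))
  convert hsub using 2 <;> push_cast <;> ring

theorem PathIn.exists_counter_le {l : List E} {x y : σ × ℤ}
    (h : PathIn (counterStep step eff) (S ×ˢ Set.Ici 0) x l y) :
    ∃ H : ℕ, PathIn (counterStep step eff) (S ×ˢ Set.Icc (0 : ℤ) H) x l y := by
  obtain ⟨l₁, l₂, c, h₁, h₂, rfl⟩ := h.exists_lowest_vertex fun z => OrderDual.toDual z.2
  refine ⟨c.2.toNat, (h₁.append h₂).mono ?_⟩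
  rintro z ⟨⟨hz, hz0⟩, hzc⟩
  have hz_le : z.2 ≤ c.2 := OrderDual.toDual_le_toDual.mp hzc
  exact ⟨hz, hz0, hz_le.trans (Int.self_le_toNat _)⟩

/-- The bound on the length of a shortest path between low configurations: the number of
configurations of `N` states whose counter is at most `(N * M) ^ 2 * M`. -/
def lowBound (N M : ℕ) : ℕ := N * ((N * M) ^ 2 * M + 1)

theorem PathIn.exists_length_le_lowBound (heff : ∀ a e b, step a e b → |eff e| ≤ M)
    {St : Finset σ} {l : List E} {x y : σ × ℤ} (hx : x.2 < M) (hy : y.2 < M)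
    (h : PathIn (counterStep step eff) (St ×ˢ Set.Ici 0) x l y) :
    ∃ l', PathIn (counterStep step eff) (St ×ˢ Set.Ici 0) x l' y ∧
      l'.length ≤ lowBound St.card M := by
  obtain ⟨H, hH⟩ := h.exists_counter_le
  have hM : 0 < M := by exact_mod_cast (Set.mem_Ici.mp h.source_mem.2).trans_lt hx
  set n := max H ((St.card * M) ^ 2)
  have hHn : (H : ℤ) ≤ n * M := by
    exact_mod_cast (le_max_left _ _).trans (Nat.le_mul_of_pos_right n hM)
  have hmem : (x, y) ∈ lowPairs step eff (St : Set σ) M (n * M) :=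
    lowPairs_mono hHn ⟨hx, hy, l, hH⟩
  rw [lowPairs_stabilise heff St (le_max_right _ _)] at hmem
  obtain ⟨-, -, l', hl'⟩ := hmem
  set B : ℕ := (St.card * M) ^ 2 * M with hB
  have hfin : (St : Set σ) ×ˢ Set.Icc (0 : ℤ) (((St.card * M) ^ 2 : ℕ) * M) ⊆
      (St ×ˢ Finset.Icc (0 : ℤ) B : Finset (σ × ℤ)) := by
    rw [Finset.coe_product, Finset.coe_Icc, hB]
    push_cast
    rfl
  obtain ⟨l'', -, hl'', hlen⟩ := hl'.exists_sublist_length_lt_card hfin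
  refine ⟨l'', hl''.mono (Set.prod_mono_right Set.Icc_subset_Ici_self), hlen.le.trans_eq ?_⟩
  rw [Finset.card_product, Int.card_Icc, lowBound, ← hB]
  congr 1

end LowPaths

/-! ### One-counter systems: paths ending or starting at their lowest counter value -/

section Descent

variable {σ E : Type*} {step : σ → E → σ → Prop} {eff : E → ℤ} {S : Set σ} {M K : ℕ} {f m : ℤ}
  {l : List E}

theorem PathIn.shift_Ici {a b : σ} {f' m' n n' : ℤ}
    (h : PathIn (counterStep step eff) (S ×ˢ Set.Ici f) (a, m) l (b, n)) (k : ℤ)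
    (hf : f' ≤ f + k) (hm : m + k = m') (hn : n + k = n') :
    PathIn (counterStep step eff) (S ×ˢ Set.Ici f') (a, m') l (b, n') :=
  h.shift k (fun _ hz => ⟨hz.1, hf.trans (add_le_add_left (Set.mem_Ici.mp hz.2) k)⟩) hm hn

/-- A label `(d, l)` is read from `a` to `b` if `l` has length at most `K` and labels a path from
`(a, d)` to `(b, 0)` with nonnegative counter, where `0 < d ≤ M`. -/
def dropStep (step : σ → E → σ → Prop) (eff : E → ℤ) (S : Set σ) (M K : ℕ) (a : σ)
    (d : ℕ × List E) (b : σ) : Prop :=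
  (0 < d.1 ∧ d.1 ≤ M) ∧ d.2.length ≤ K ∧
    PathIn (counterStep step eff) (S ×ˢ Set.Ici 0) (a, (d.1 : ℤ)) d.2 (b, 0)

theorem PathIn.realize_drops {L : List (ℕ × List E)} {a b : σ}
    (h : PathIn (dropStep step eff S M K) S a L b) (hf : f ≤ m) :
    PathIn (counterStep step eff) (S ×ˢ Set.Ici f) (a, m + (L.map Prod.fst).sum)
      (L.map Prod.snd).flatten (b, m) := by
  induction L generalizing a with
  | nil => exact ⟨by simp [h.1], h.2, by simpa⟩
  | cons d L ih =>
    obtain ⟨-, c, ⟨-, -, hd⟩, hL⟩ := h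
    refine (hd.shift_Ici (m + (L.map Prod.fst).sum) (by omega) ?_ (zero_add _)).append (ih hL)
    push_cast [List.map_cons, List.sum_cons]
    ring

theorem PathIn.length_flatten_drops_le {L : List (ℕ × List E)} {a b : σ}
    (h : PathIn (dropStep step eff S M K) S a L b) :
    (L.map Prod.snd).flatten.length ≤ L.length * K := by
  rw [List.length_flatten, List.map_map]
  exact h.weight_le (w := List.length ∘ Prod.snd) fun _ _ _ hd => hd.2.1

theorem PathIn.realize_drop_cycle {β : List (ℕ × List E)} {z : σ}
    (h : PathIn (dropStep step eff S M K) S z β z) (hf : f ≤ m) (k : ℕ) :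
    PathIn (counterStep step eff) (S ×ˢ Set.Ici f) (z, m + (k * (β.map Prod.fst).sum : ℕ))
      (List.replicate k (β.map Prod.snd).flatten).flatten (z, m) := by
  induction k with
  | zero => exact ⟨by simp, h.source_mem, by simpa⟩
  | succ k ih =>
    rw [List.replicate_succ, List.flatten_cons, Nat.succ_mul, Nat.cast_add, ← add_assoc]
    exact (h.realize_drops (by omega)).append ih

theorem PathIn.exists_short_drop (heff : ∀ a e b, step a e b → |eff e| ≤ M) {St : Finset σ}
    {d : ℤ} (hd : 0 < d) {a : σ} {x y : σ × ℤ} {e : E}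
    (h : PathIn (counterStep step eff) (St ×ˢ Set.Ici m) (a, m) l x)
    (he : counterStep step eff x e y) (hy : y.1 ∈ St) (hyd : y.2 + d = m) :
    ∃ l', l'.length ≤ lowBound St.card M + 1 ∧
      PathIn (counterStep step eff) (St ×ˢ Set.Ici 0) (a, d) l' (y.1, 0) := by
  have hx : m ≤ x.2 := h.target_mem.2
  have hxy := counterStep_le heff he
  have hlowered : PathIn (counterStep step eff) (St ×ˢ Set.Ici 0) (a, 0) l (x.1, x.2 - m) :=
    h.shift_Ici (-m) (by omega) (by omega) rfl
  obtain ⟨l', hl', hlen⟩ := hlowered.exists_length_le_lowBound heff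
    (by dsimp only; omega) (by dsimp only; omega)
  have hraised : PathIn (counterStep step eff) (St ×ˢ Set.Ici 0) (a, d) l' (x.1, x.2 - m + d) :=
    hl'.shift_Ici d (by omega) (zero_add d) rfl
  have hlast : counterStep step eff (x.1, x.2 - m + d) e (y.1, 0) :=
    ⟨he.1, by have := he.2; dsimp only; omega⟩
  exact ⟨l' ++ [e], by simpa using hlen, hraised.concat hlast ⟨hy, Set.mem_Ici.mpr le_rfl⟩⟩

-- The path is cut at the first visits of successive counter minima.
theorem PathIn.exists_drops (heff : ∀ a e b, step a e b → |eff e| ≤ M) (hM : 0 < M)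
    {St : Finset σ} {a b : σ} {n : ℕ}
    (h : PathIn (counterStep step eff) (St ×ˢ Set.Ici 0) (a, (n : ℤ)) l (b, 0)) :
    ∃ L c l', PathIn (dropStep step eff St M (lowBound St.card M + 1)) St a L c ∧
      (L.map Prod.fst).sum = n ∧ l'.length ≤ lowBound St.card M ∧
      PathIn (counterStep step eff) (St ×ˢ Set.Ici 0) (c, 0) l' (b, 0) := by
  induction n using Nat.strong_induction_on generalizing a l with
  | _ n ih =>
    rcases h.inter_or_exists_first_exit (P := {z | (n : ℤ) ≤ z.2}) (by simp) with
      hstay | ⟨l₁, e, l₂, x, y, rfl, h₁, he, hy, h₂⟩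
    · obtain rfl : n = 0 := by simpa using hstay.target_mem.2
      obtain ⟨l', hl', hlen⟩ := h.exists_length_le_lowBound heff (by simpa) (by simpa)
      exact ⟨[], a, l', .refl h.source_mem.1, rfl, hlen, hl'⟩
    · have hy_lt : y.2 < n := not_le.mp hy
      have hy_nonneg : 0 ≤ y.2 := h₂.source_mem.2
      obtain ⟨n', hn'⟩ := Int.eq_ofNat_of_zero_le hy_nonneg
      have hx : (n : ℤ) ≤ x.2 := h₁.target_mem.2
      have hxy := counterStep_le heff he
      have h₁' : PathIn (counterStep step eff) (St ×ˢ Set.Ici (n : ℤ)) (a, (n : ℤ)) l₁ x :=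
        h₁.mono fun z hz => ⟨hz.1.1, hz.2⟩
      obtain ⟨w, hw_len, hw⟩ := h₁'.exists_short_drop heff (d := (n - n' : ℕ)) (by omega) he
        h₂.source_mem.1 (by omega)
      rw [show y = (y.1, (n' : ℤ)) from Prod.ext rfl hn'] at h₂
      obtain ⟨L, c, l', hL, hsum, hlen, hl'⟩ := ih n' (by omega) h₂
      refine ⟨(n - n', w) :: L, c, l', .cons h.source_mem.1 ⟨?_, hw_len, hw⟩ hL, ?_, hlen, hl'⟩
      · dsimp only
        omega
      · rw [List.map_cons, List.sum_cons, hsum]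
        omega

/-- `y` is reached from `x` along `α β^e γ` with counter at least `f`, where `β` is a cycle of
states and `|α| + |β| + |γ| ≤ K`. -/
def OneCycleReach (step : σ → E → σ → Prop) (eff : E → ℤ) (S : Set σ) (f : ℤ) (K : ℕ)
    (x y : σ × ℤ) : Prop :=
  ∃ α β γ e z m n, PathIn (counterStep step eff) (S ×ˢ Set.Ici f) x α (z, m) ∧
    PathIn (counterStep step eff) (S ×ˢ Set.Ici f) (z, m) (List.replicate e β).flatten (z, n) ∧
    PathIn (counterStep step eff) (S ×ˢ Set.Ici f) (z, n) γ y ∧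
    PathIn step S z β z ∧ α.length + β.length + γ.length ≤ K

theorem OneCycleReach.reverse {x y : σ × ℤ}
    (h : OneCycleReach (fun a e b => step b e a) (fun e => -eff e) S f K x y) :
    OneCycleReach step eff S f K y x := by
  obtain ⟨α, β, γ, e, z, m, n, hα, hβ, hγ, hz, hlen⟩ := h
  have hα' := hα.reverse_counter
  have hβ' := hβ.reverse_counter
  have hγ' := hγ.reverse_counter
  rw [List.reverse_flatten, List.map_replicate, List.reverse_replicate] at hβ'
  simp only [neg_neg] at hα' hβ' hγ'
  refine ⟨γ.reverse, β.reverse, α.reverse, e, z, n, m, hγ', hβ', hα', hz.reverse, ?_⟩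
  simp only [List.length_reverse]
  omega

/-- The bound for `α β* γ` in `PathIn.oneCycleReach_of_descent`: three sequences of drops and a
final path between low configurations. -/
def descentBound (N M : ℕ) : ℕ := 3 * (N * (N * M + 1) * (lowBound N M + 1)) + lowBound N M

theorem PathIn.oneCycleReach_of_descent (heff : ∀ a e b, step a e b → |eff e| ≤ M) (hM : 0 < M)
    {St : Finset σ} {a b : σ}
    (h : PathIn (counterStep step eff) (St ×ˢ Set.Ici f) (a, m) l (b, f)) :
    OneCycleReach step eff St f (descentBound St.card M) (a, m) (b, f) := by
  obtain ⟨n, hn⟩ := Int.eq_ofNat_of_zero_le (sub_nonneg.mpr (Set.mem_Ici.mp h.source_mem.2))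
  dsimp only at hn
  have hlowered : PathIn (counterStep step eff) (St ×ˢ Set.Ici 0) (a, (n : ℤ)) l (b, 0) :=
    h.shift_Ici (-f) (by omega) (by omega) (add_neg_cancel f)
  obtain ⟨L, c, l', hL, hsum, hlen', hl'⟩ := hlowered.exists_drops heff hM
  obtain ⟨z, L₁, β, L₂, k, h₁, hβ, h₂, hlen₁, hlenβ, hlen₂, hsum'⟩ :=
    hL.exists_one_cycle_of_same_weight (w := Prod.fst) subset_rfl fun x e y he => he.1
  obtain ⟨n₂, hn₂⟩ : ∃ n₂, n₂ = f + (L₂.map Prod.fst).sum := ⟨_, rfl⟩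
  obtain ⟨n₁, hn₁⟩ : ∃ n₁, n₁ = n₂ + (k * (β.map Prod.fst).sum : ℕ) := ⟨_, rfl⟩
  have hm : m = n₁ + (L₁.map Prod.fst).sum := by omega
  have hcycle : PathIn step St z (β.map Prod.snd).flatten z :=
    (hβ.realize_drops le_rfl (m := 0)).forget_counter fun _ hx => hx.1
  have hbound (L' : List (ℕ × List E)) (hL' : L'.length ≤ St.card * (St.card * M + 1)) :=
    Nat.mul_le_mul_right (lowBound St.card M + 1) hL'
  have hα := (h₁.length_flatten_drops_le).trans (hbound L₁ hlen₁)
  have hβ' := (hβ.length_flatten_drops_le).trans (hbound β hlenβ)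
  have hγ := (h₂.length_flatten_drops_le).trans (hbound L₂ hlen₂)
  refine ⟨(L₁.map Prod.snd).flatten, (β.map Prod.snd).flatten, (L₂.map Prod.snd).flatten ++ l', k,
    z, n₁, n₂, hm ▸ h₁.realize_drops (by omega), hn₁ ▸ hβ.realize_drop_cycle (by omega) k,
    (hn₂ ▸ h₂.realize_drops le_rfl).append
      (hl'.shift_Ici f (by omega) (zero_add f) (zero_add f)), hcycle, ?_⟩
  rw [descentBound, List.length_append]
  omega

theorem PathIn.oneCycleReach_of_ascent (heff : ∀ a e b, step a e b → |eff e| ≤ M) (hM : 0 < M)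
    {St : Finset σ} {a b : σ}
    (h : PathIn (counterStep step eff) (St ×ˢ Set.Ici f) (a, f) l (b, m)) :
    OneCycleReach step eff St f (descentBound St.card M) (a, f) (b, m) :=
  (h.reverse_counter.oneCycleReach_of_descent
    (fun a e b he => (abs_neg (eff e)).trans_le (heff b e a he)) hM).reverse

end Descent

/-! ### Runs as paths, and concatenation of linear path schemes -/

section Schemes

variable {d : ℕ} {T : Finset (Trans d)}

/-- A configuration `p(u)` of a `d`-VASS. -/
abbrev Config (d : ℕ) := ℕ × Vec d

/-- The control graph of a VASS, with the transitions as labels. -/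
def transStep (T : Finset (Trans d)) (p : ℕ) (t : Trans d) (q : ℕ) : Prop :=
  t ∈ T ∧ t.1 = p ∧ t.2.2 = q

/-- The one-step relation between configurations. -/
def configStep (T : Finset (Trans d)) : Config d → Trans d → Config d → Prop :=
  counterStep (transStep T) fun t => t.2.1

/-- The configurations with vector in `ℕ^d`. -/
def natConfigs (d : ℕ) : Set (Config d) := {x | x.2 ∈ NatSet d}

theorem pathIn_transStep_iff {p q : ℕ} {π : List (Trans d)} :
    PathIn (transStep T) Set.univ p π q ↔ (∀ t ∈ π, t ∈ T) ∧ IsPathFrom p q π := by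
  induction π generalizing p with
  | nil => simp [PathIn, IsPathFrom]
  | cons t π ih =>
    simp only [PathIn, IsPathFrom, transStep, ih, List.forall_mem_cons, Set.mem_univ, true_and,
      ↓existsAndEq, and_true]
    tauto

theorem disp_cons (t : Trans d) (π : List (Trans d)) : disp (t :: π) = t.2.1 + disp π := by
  rw [disp, List.map_cons, List.sum_cons, disp]

theorem run_cons_iff {A : Set (Vec d)} {p q : ℕ} {u v : Vec d} {t : Trans d}
    {π : List (Trans d)} : Run T A p u q v (t :: π) ↔
      u ∈ A ∧ t ∈ T ∧ t.1 = p ∧ Run T A t.2.2 (u + t.2.1) q v π := by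
  have hprefix : (∀ i, 1 ≤ i → i ≤ (t :: π).length → u + disp ((t :: π).take i) ∈ A) ↔
      u + t.2.1 ∈ A ∧ ∀ i, 1 ≤ i → i ≤ π.length → u + t.2.1 + disp (π.take i) ∈ A := by
    have htake (i : ℕ) : u + disp ((t :: π).take (i + 1)) = u + t.2.1 + disp (π.take i) := by
      rw [List.take_succ_cons, disp_cons, add_assoc]
    refine ⟨fun h => ⟨?_, fun i _ hi => ?_⟩, fun h i hi hi' => ?_⟩
    · simpa [disp] using h 1 le_rfl (by simp)
    · exact htake i ▸ h (i + 1) (by omega) (by simpa)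
    · obtain ⟨i, rfl⟩ := Nat.exists_eq_add_of_le' hi
      rcases Nat.eq_zero_or_pos i with rfl | hi_pos
      · simpa [disp] using h.1
      · exact htake i ▸ h.2 i hi_pos (by simpa using hi')
  simp only [Run, hprefix, IsPathFrom, List.forall_mem_cons, disp_cons, ← add_assoc]
  tauto

theorem run_iff_pathIn {A : Set (Vec d)} {p q : ℕ} {u v : Vec d} {π : List (Trans d)} :
    Run T A p u q v π ↔ PathIn (configStep T) {x | x.2 ∈ A} (p, u) π (q, v) := by
  induction π generalizing p u with
  | nil =>
    simp only [Run, PathIn, IsPathFrom, disp, List.not_mem_nil, IsEmpty.forall_iff, implies_true,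
      List.map_nil, List.sum_nil, add_zero, List.length_nil, nonpos_iff_eq_zero, List.take_nil,
      true_and, Prod.mk.injEq, Set.mem_ofPred_eq]
    tauto
  | cons t π ih =>
    rw [run_cons_iff, PathIn]
    simp only [configStep, counterStep, transStep, ih, Set.mem_ofPred_eq, Prod.exists, ↓existsAndEq,
      and_true, and_congr_right_iff]
    tauto

/-- Concatenation of linear path schemes; the last segment of the first is merged with the first
segment of the second. -/
def lpsAppend : LPS d → LPS d → LPS d
  | (α, []), ρ' => (α ++ ρ'.1, ρ'.2)
  | (α, s :: S), ρ' => (α, (s.1, (lpsAppend (s.2, S) ρ').1) :: (lpsAppend (s.2, S) ρ').2)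
  termination_by ρ => ρ.2.length

theorem lpsSupport_lpsAppend (ρ ρ' : LPS d) :
    lpsSupport (lpsAppend ρ ρ') = lpsSupport ρ ++ lpsSupport ρ' := by
  obtain ⟨α, S⟩ := ρ
  induction S generalizing α with
  | nil => simp [lpsAppend, lpsSupport]
  | cons s S ih =>
    have := ih s.2
    simp only [lpsSupport] at this
    simp [lpsAppend, lpsSupport, this]

theorem map_fst_lpsAppend (ρ ρ' : LPS d) :
    (lpsAppend ρ ρ').2.map Prod.fst = ρ.2.map Prod.fst ++ ρ'.2.map Prod.fst := by
  obtain ⟨α, S⟩ := ρ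
  induction S generalizing α with
  | nil => simp [lpsAppend]
  | cons s S ih => simpa [lpsAppend] using ih s.2

theorem lpsWord_lpsAppend {ρ ρ' : LPS d} {e e' : List ℕ} (he : e.length = numCycles ρ) :
    lpsWord (lpsAppend ρ ρ') (e ++ e') = lpsWord ρ e ++ lpsWord ρ' e' := by
  obtain ⟨α, S⟩ := ρ
  induction S generalizing α e with
  | nil =>
    obtain rfl := List.length_eq_zero_iff.mp he
    simp [lpsAppend, lpsWord]
  | cons s S ih =>
    obtain ⟨n, e, rfl⟩ := List.exists_cons_of_length_eq_add_one he
    have := ih s.2 (Nat.succ_injective he)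
    simp only [lpsWord] at this
    simp [lpsAppend, lpsWord, this]

/-- `y` is reached from `x` through nonnegative vectors along a word of some linear path scheme
with at most `n` cycles and of length at most `K`. -/
def SchemeReach (T : Finset (Trans d)) (n K : ℕ) (x y : Config d) : Prop :=
  ∃ ρ, IsLPSFrom T x.1 y.1 ρ ∧ numCycles ρ ≤ n ∧ lpsLen ρ ≤ K ∧
    ∃ π, InLang ρ π ∧ PathIn (configStep T) (natConfigs d) x π y

namespace SchemeReach

variable {n n' K K' : ℕ} {x y z : Config d} {π : List (Trans d)}

theorem mono (h : SchemeReach T n K x y) (hn : n ≤ n') (hK : K ≤ K') : SchemeReach T n' K' x y := by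
  obtain ⟨ρ, hρ, hn', hK', hπ⟩ := h
  exact ⟨ρ, hρ, hn'.trans hn, hK'.trans hK, hπ⟩

theorem trans (h : SchemeReach T n K x y) (h' : SchemeReach T n' K' y z) :
    SchemeReach T (n + n') (K + K') x z := by
  obtain ⟨ρ, ⟨hT, hpath, hcyc⟩, hn, hK, π, ⟨e, he, rfl⟩, hπ⟩ := h
  obtain ⟨ρ', ⟨hT', hpath', hcyc'⟩, hn', hK', π', ⟨e', he', rfl⟩, hπ'⟩ := h'
  have hnum : numCycles (lpsAppend ρ ρ') = numCycles ρ + numCycles ρ' := by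
    simpa [numCycles] using congrArg List.length (map_fst_lpsAppend ρ ρ')
  have hsupp := pathIn_transStep_iff.mp ((pathIn_transStep_iff.mpr ⟨hT, hpath⟩).append
    (pathIn_transStep_iff.mpr ⟨hT', hpath'⟩))
  rw [← lpsSupport_lpsAppend] at hsupp
  refine ⟨lpsAppend ρ ρ', ⟨hsupp.1, hsupp.2, fun s hs => ?_⟩, by omega, ?_, lpsWord _ (e ++ e'),
    ⟨e ++ e', by rw [List.length_append, hnum, he, he'], rfl⟩, ?_⟩
  · have hs' := List.mem_map_of_mem (f := Prod.fst) hs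
    rw [map_fst_lpsAppend, List.mem_append, List.mem_map, List.mem_map] at hs'
    rcases hs' with ⟨s', hs', heq⟩ | ⟨s', hs', heq⟩
    · exact heq ▸ hcyc s' hs'
    · exact heq ▸ hcyc' s' hs'
  · rw [lpsLen, lpsSupport_lpsAppend, List.length_append]
    exact Nat.add_le_add hK hK'
  · rw [lpsWord_lpsAppend he]
    exact hπ.append hπ'

theorem of_path (h : PathIn (configStep T) (natConfigs d) x π y) :
    SchemeReach T 0 π.length x y := by
  obtain ⟨hT, hpath⟩ := pathIn_transStep_iff.mp (h.forget_counter fun _ _ => Set.mem_univ _)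
  have hsupp : lpsSupport (π, []) = π := by simp [lpsSupport]
  refine ⟨(π, []), ⟨hsupp.symm ▸ hT, hsupp.symm ▸ hpath, by simp⟩, le_rfl,
    (congrArg List.length hsupp).le, π, ⟨[], rfl, by simp [lpsWord]⟩, h⟩

theorem of_cycle {p e : ℕ} {u v : Vec d} (hπ : PathIn (transStep T) Set.univ p π p)
    (h : PathIn (configStep T) (natConfigs d) (p, u) (List.replicate e π).flatten (p, v)) :
    SchemeReach T 1 π.length (p, u) (p, v) := by
  rcases eq_or_ne π [] with rfl | hne
  · exact (of_path h).mono (Nat.zero_le 1) (by simp)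
  · obtain ⟨hT, hpath⟩ := pathIn_transStep_iff.mp hπ
    have hsupp : lpsSupport ([], [(π, [])]) = π := by simp [lpsSupport]
    refine ⟨([], [(π, [])]), ⟨hsupp.symm ▸ hT, hsupp.symm ▸ hpath, ?_⟩, le_rfl,
      (congrArg List.length hsupp).le, _, ⟨[e], rfl, by simp [lpsWord]⟩, h⟩
    simpa using ⟨hne, p, hpath⟩

end SchemeReach

theorem finite_setOf_lists_length_le {α : Type*} {s : Set α} (hs : s.Finite) (n : ℕ) :
    {l : List α | (∀ a ∈ l, a ∈ s) ∧ l.length ≤ n}.Finite := by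
  have := hs.to_subtype
  refine ((List.finite_length_le s n).image (List.map Subtype.val)).subset ?_
  rintro l ⟨hl, hn⟩
  exact ⟨l.attachWith _ hl, by simpa, by simp⟩

theorem finite_setOf_lps (T : Finset (Trans d)) (n K : ℕ) :
    {ρ : LPS d | (∃ p q, IsLPSFrom T p q ρ) ∧ lpsLen ρ ≤ K ∧ numCycles ρ ≤ n}.Finite := by
  have hwords := finite_setOf_lists_length_le T.finite_toSet K
  refine (hwords.prod (finite_setOf_lists_length_le (hwords.prod hwords) n)).subset ?_
  rintro ⟨α, S⟩ ⟨⟨p, q, hT, -, -⟩, hK, hn⟩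
  have hsub {w : List (Trans d)} (hw : w.Sublist (lpsSupport (α, S))) :
      (∀ t ∈ w, t ∈ T) ∧ w.length ≤ K :=
    ⟨fun t ht => hT t (hw.subset ht), hw.length_le.trans hK⟩
  refine ⟨hsub (List.sublist_append_left _ _), fun s hs => ?_, hn⟩
  have hs' : (s.1 ++ s.2).Sublist (lpsSupport (α, S)) :=
    (List.sublist_flatten_of_mem (List.mem_map_of_mem (f := fun s => s.1 ++ s.2) hs)).trans
      (List.sublist_append_right _ _)
  exact ⟨hsub ((List.sublist_append_left _ _).trans hs'),
    hsub ((List.sublist_append_right _ _).trans hs')⟩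

end Schemes

/-! ### Runs in a strip -/

section Strip

variable {T : Finset (Trans 2)} {Q : Finset ℕ} {D M : ℕ} {i : Fin 2} {f : ℤ} {x y : Config 2}
  {π : List (Trans 2)}

theorem abs_le_tnorm {d : ℕ} {T : Finset (Trans d)} {t : Trans d} (ht : t ∈ T) (k : Fin d) :
    |t.2.1 k| ≤ tnorm T := by
  have hk : (t.2.1 k).natAbs ≤ vnorm t.2.1 :=
    Finset.le_sup (f := fun k => (t.2.1 k).natAbs) (Finset.mem_univ k)
  have ht' : vnorm t.2.1 ≤ tnorm T := Finset.le_sup (f := fun t => vnorm t.2.1) ht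
  rw [Int.abs_eq_natAbs]
  exact_mod_cast hk.trans ht'

theorem forall_fin_two_iff (i : Fin 2) {P : Fin 2 → Prop} : (∀ k, P k) ↔ P i ∧ P (i + 1) := by
  fin_cases i <;> simp [Fin.forall_fin_two, and_comm]

/-- Coordinate `i` is made part of the state, the other coordinate `i + 1` is kept as counter. -/
def splitCoord (i : Fin 2) : Config 2 ≃ (ℕ × ℤ) × ℤ where
  toFun x := ((x.1, x.2 i), x.2 (i + 1))
  invFun z := (z.1.1, fun k => if k = i then z.1.2 else z.2)
  left_inv x := Prod.ext rfl (funext ((forall_fin_two_iff i).mpr (by simp)))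
  right_inv z := by simp

/-- The control states of a strip, remembering the value of the bounded coordinate. -/
noncomputable def stripStates (Q : Finset ℕ) (D : ℕ) : Finset (ℕ × ℤ) := Q ×ˢ Finset.Icc (0 : ℤ) D

theorem card_stripStates (Q : Finset ℕ) (D : ℕ) : (stripStates Q D).card = Q.card * (D + 1) := by
  rw [stripStates, Finset.card_product, Int.card_Icc]
  congr 1

/-- The configurations with coordinate `i` in `[0, D]` and the other coordinate at least `f`. -/
def strip (Q : Finset ℕ) (D : ℕ) (i : Fin 2) (f : ℤ) : Set (Config 2) :=
  splitCoord i ⁻¹' (stripStates Q D ×ˢ Set.Ici f)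

theorem mem_strip_iff :
    x ∈ strip Q D i f ↔ (x.1 ∈ Q ∧ 0 ≤ x.2 i ∧ x.2 i ≤ D) ∧ f ≤ x.2 (i + 1) := by
  simp [strip, stripStates, splitCoord]

theorem strip_subset_natConfigs (hf : 0 ≤ f) : strip Q D i f ⊆ natConfigs 2 := by
  intro x hx
  rw [mem_strip_iff] at hx
  exact (forall_fin_two_iff i).mpr ⟨hx.1.2.1, hf.trans hx.2⟩

/-- The steps of a 2-VASS after `splitCoord i`, as those of a one-counter system. -/
def stripStep (T : Finset (Trans 2)) (i : Fin 2) : (ℕ × ℤ) × ℤ → Trans 2 → (ℕ × ℤ) × ℤ → Prop :=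
  counterStep (counterStep (transStep T) fun t => t.2.1 i) fun t => t.2.1 (i + 1)

theorem stripStep_splitCoord_iff {t : Trans 2} :
    stripStep T i (splitCoord i x) t (splitCoord i y) ↔ configStep T x t y := by
  simp only [stripStep, counterStep, splitCoord, configStep, funext_iff, Pi.add_apply,
    forall_fin_two_iff i, Equiv.coe_fn_mk, and_assoc]

theorem pathIn_stripStep_iff :
    PathIn (stripStep T i) (stripStates Q D ×ˢ Set.Ici f) (splitCoord i x) π (splitCoord i y) ↔
      PathIn (configStep T) (strip Q D i f) x π y :=
  pathIn_equiv_iff (splitCoord i) fun _ _ _ => stripStep_splitCoord_iff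

theorem abs_le_of_counterStep_transStep (hM : tnorm T < M) (a : ℕ × ℤ) (t : Trans 2) (b : ℕ × ℤ)
    (h : counterStep (transStep T) (fun t => t.2.1 i) a t b) : |t.2.1 (i + 1)| ≤ M :=
  (abs_le_tnorm h.1.1 _).trans (by exact_mod_cast hM.le)

theorem OneCycleReach.schemeReach {K : ℕ} (hf : 0 ≤ f)
    (h : OneCycleReach (counterStep (transStep T) fun t => t.2.1 i) (fun t => t.2.1 (i + 1))
      (stripStates Q D) f K (splitCoord i x) (splitCoord i y)) : SchemeReach T 1 K x y := by
  obtain ⟨α, β, γ, e, z, m, n, hα, hβ, hγ, hz, hlen⟩ := h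
  obtain ⟨x₁, hx₁⟩ := (splitCoord i).surjective (z, m)
  obtain ⟨x₂, hx₂⟩ := (splitCoord i).surjective (z, n)
  have hstate₁ : x₁.1 = z.1 := congrArg (fun w => w.1.1) hx₁
  have hstate₂ : x₂.1 = z.1 := congrArg (fun w => w.1.1) hx₂
  rw [← hx₁] at hα hβ
  rw [← hx₂] at hβ hγ
  have hnat := strip_subset_natConfigs (Q := Q) (D := D) (i := i) hf
  have hcycle : PathIn (transStep T) Set.univ z.1 β z.1 :=
    hz.forget_counter fun _ _ => Set.mem_univ _
  obtain ⟨p, u⟩ := x₁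
  obtain ⟨q, v⟩ := x₂
  obtain rfl : p = z.1 := hstate₁
  obtain rfl : q = z.1 := hstate₂
  exact ((SchemeReach.of_path ((pathIn_stripStep_iff.mp hα).mono hnat)).trans
    ((SchemeReach.of_cycle hcycle ((pathIn_stripStep_iff.mp hβ).mono hnat)).trans
      (SchemeReach.of_path ((pathIn_stripStep_iff.mp hγ).mono hnat)))).mono le_rfl (by omega)

theorem PathIn.schemeReach_of_strip_descent (hM : tnorm T < M) (hf : 0 ≤ f)
    (h : PathIn (configStep T) (strip Q D i f) x π y) (hy : y.2 (i + 1) = f) :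
    SchemeReach T 1 (descentBound (Q.card * (D + 1)) M) x y := by
  subst hy
  rw [← card_stripStates]
  exact ((pathIn_stripStep_iff.mpr h).oneCycleReach_of_descent
    (abs_le_of_counterStep_transStep hM) (Nat.zero_lt_of_lt hM)).schemeReach hf

theorem PathIn.schemeReach_of_strip_ascent (hM : tnorm T < M) (hf : 0 ≤ f)
    (h : PathIn (configStep T) (strip Q D i f) x π y) (hx : x.2 (i + 1) = f) :
    SchemeReach T 1 (descentBound (Q.card * (D + 1)) M) x y := by
  subst hx
  rw [← card_stripStates]
  exact ((pathIn_stripStep_iff.mpr h).oneCycleReach_of_ascent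
    (abs_le_of_counterStep_transStep hM) (Nat.zero_lt_of_lt hM)).schemeReach hf

theorem PathIn.exists_short_strip_path (hM : tnorm T < M)
    (h : PathIn (configStep T) (strip Q D i 0) x π y) (hx : x.2 (i + 1) < M)
    (hy : y.2 (i + 1) < M) :
    ∃ π', PathIn (configStep T) (natConfigs 2) x π' y ∧
      π'.length ≤ lowBound (Q.card * (D + 1)) M := by
  obtain ⟨π', hπ', hlen⟩ := (pathIn_stripStep_iff.mpr h).exists_length_le_lowBound
    (abs_le_of_counterStep_transStep hM) hx hy
  rw [card_stripStates] at hlen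
  exact ⟨π', (pathIn_stripStep_iff.mp hπ').mono (strip_subset_natConfigs le_rfl), hlen⟩

theorem PathIn.exists_lowest_strip_vertex (h : PathIn (configStep T) (strip Q D i 0) x π y) :
    ∃ π₁ π₂ c, 0 ≤ c.2 (i + 1) ∧ PathIn (configStep T) (strip Q D i (c.2 (i + 1))) x π₁ c ∧
      PathIn (configStep T) (strip Q D i (c.2 (i + 1))) c π₂ y := by
  obtain ⟨π₁, π₂, c, h₁, h₂, -⟩ := h.exists_lowest_vertex fun z => z.2 (i + 1)
  have hsub : strip Q D i 0 ∩ {z | c.2 (i + 1) ≤ z.2 (i + 1)} ⊆ strip Q D i (c.2 (i + 1)) :=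
    fun z hz => mem_strip_iff.mpr ⟨(mem_strip_iff.mp hz.1).1, hz.2⟩
  exact ⟨π₁, π₂, c, (mem_strip_iff.mp h₁.target_mem.1).2, h₁.mono hsub, h₂.mono hsub⟩

theorem strip_subset_strip_zero (hf : 0 ≤ f) : strip Q D i f ⊆ strip Q D i 0 :=
  Set.preimage_mono (Set.prod_mono_right (Set.Ici_subset_Ici.mpr hf))

theorem PathIn.schemeReach_of_strip (hM : tnorm T < M)
    (h : PathIn (configStep T) (strip Q D i 0) x π y) :
    SchemeReach T 2 (2 * descentBound (Q.card * (D + 1)) M) x y := by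
  obtain ⟨π₁, π₂, c, hc, h₁, h₂⟩ := h.exists_lowest_strip_vertex
  rw [two_mul]
  exact (h₁.schemeReach_of_strip_descent hM hc rfl).trans
    (h₂.schemeReach_of_strip_ascent hM hc rfl)

theorem PathIn.schemeReach_of_strip_of_target_lt (hM : tnorm T < M)
    (h : PathIn (configStep T) (strip Q D i 0) x π y) (hy : y.2 (i + 1) < M) :
    SchemeReach T 1
      (descentBound (Q.card * (D + 1)) M + lowBound (Q.card * (D + 1)) M) x y := by
  obtain ⟨π₁, π₂, c, hc, h₁, h₂⟩ := h.exists_lowest_strip_vertex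
  have hc_lt : c.2 (i + 1) < M := (mem_strip_iff.mp h₂.target_mem).2.trans_lt hy
  obtain ⟨π', hπ', hlen⟩ :=
    (h₂.mono (strip_subset_strip_zero hc)).exists_short_strip_path hM hc_lt hy
  exact ((h₁.schemeReach_of_strip_descent hM hc rfl).trans (.of_path hπ')).mono le_rfl (by omega)

theorem PathIn.schemeReach_of_strip_of_source_lt (hM : tnorm T < M)
    (h : PathIn (configStep T) (strip Q D i 0) x π y) (hx : x.2 (i + 1) < M) :
    SchemeReach T 1
      (descentBound (Q.card * (D + 1)) M + lowBound (Q.card * (D + 1)) M) x y := by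
  obtain ⟨π₁, π₂, c, hc, h₁, h₂⟩ := h.exists_lowest_strip_vertex
  have hc_lt : c.2 (i + 1) < M := (mem_strip_iff.mp h₁.source_mem).2.trans_lt hx
  obtain ⟨π', hπ', hlen⟩ :=
    (h₁.mono (strip_subset_strip_zero hc)).exists_short_strip_path hM hx hc_lt
  exact ((SchemeReach.of_path hπ').trans (h₂.schemeReach_of_strip_ascent hM hc rfl)).mono
    le_rfl (by omega)

end Strip

/-! ### Runs in the L-shaped band -/

section Band

variable {T : Finset (Trans 2)} {Q : Finset ℕ} {D M : ℕ} {i : Fin 2} {x y : Config 2}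
  {t : Trans 2} {π : List (Trans 2)}

/-- The configurations with state in `Q` and vector in the L-shaped band. -/
def band (Q : Finset ℕ) (D : ℕ) : Set (Config 2) := {x | x.1 ∈ Q ∧ x.2 ∈ LBand D}

/-- The configurations with state in `Q` all of whose coordinates lie in `[0, M)`. -/
noncomputable def box {d : ℕ} (Q : Finset ℕ) (M : ℕ) : Finset (Config d) :=
  Q ×ˢ Fintype.piFinset fun _ => Finset.Ico (0 : ℤ) M

theorem mem_box_iff {d : ℕ} {x : Config d} :
    x ∈ box Q M ↔ x.1 ∈ Q ∧ ∀ k, 0 ≤ x.2 k ∧ x.2 k < M := by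
  simp [box]

theorem card_box {d : ℕ} (Q : Finset ℕ) (M : ℕ) :
    (box Q M : Finset (Config d)).card = Q.card * M ^ d := by
  simp [box]

theorem mem_band_iff : x ∈ band Q D ↔ ∃ i, x ∈ strip Q D i 0 := by
  simp only [band, LBand, mem_strip_iff, Fin.exists_fin_two, Fin.forall_fin_two,
    Set.mem_ofPred_eq, zero_add, show (1 : Fin 2) + 1 = 0 from rfl]
  tauto

theorem mem_strip_of_lt (hx : x ∈ band Q D) (hlt : D < x.2 (i + 1)) : x ∈ strip Q D i 0 := by
  obtain ⟨j, hj⟩ := mem_band_iff.mp hx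
  obtain rfl | rfl : j = i ∨ j = i + 1 := by omega
  · exact hj
  · exact absurd hlt (mem_strip_iff.mp hj).1.2.2.not_gt

theorem le_of_mem_strip_of_notMem_box (hDM : D < M) (hx : x ∈ strip Q D i 0)
    (hbox : x ∉ box Q M) : M ≤ x.2 (i + 1) := by
  by_contra! hlt
  have hx' := mem_strip_iff.mp hx
  refine hbox (mem_box_iff.mpr ⟨hx'.1.1, (forall_fin_two_iff i).mpr ⟨?_, hx'.2, hlt⟩⟩)
  omega

theorem target_mem_strip (hM : D + tnorm T < M) (h : configStep T x t y)
    (hx : x ∈ strip Q D i 0) (hbox : x ∉ box Q M) (hy : y ∈ band Q D) : y ∈ strip Q D i 0 := by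
  have hge := le_of_mem_strip_of_notMem_box (by omega) hx hbox
  have habs := abs_le.mp (abs_le_tnorm h.1.1 (i + 1))
  have hstep : y.2 (i + 1) = x.2 (i + 1) + t.2.1 (i + 1) := congrFun h.2 (i + 1)
  exact mem_strip_of_lt hy (by omega)

theorem source_mem_strip (hM : D + tnorm T < M) (h : configStep T x t y)
    (hy : y ∈ strip Q D i 0) (hbox : y ∉ box Q M) (hx : x ∈ band Q D) : x ∈ strip Q D i 0 := by
  have hge := le_of_mem_strip_of_notMem_box (by omega) hy hbox
  have habs := abs_le.mp (abs_le_tnorm h.1.1 (i + 1))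
  have hstep : y.2 (i + 1) = x.2 (i + 1) + t.2.1 (i + 1) := congrFun h.2 (i + 1)
  exact mem_strip_of_lt hx (by omega)

theorem PathIn.strip_of_avoids_box (hM : D + tnorm T < M) (hx : x ∈ strip Q D i 0)
    (h : PathIn (configStep T) (band Q D ∩ {z | z ∉ box Q M}) x π y) :
    PathIn (configStep T) (strip Q D i 0) x π y := by
  rcases h.inter_or_exists_first_exit hx with
    h | ⟨π₁, t, π₂, z, z', rfl, h₁, ht, hz', h₂⟩
  · exact h.mono Set.inter_subset_right
  · exact absurd
      (target_mem_strip hM ht h₁.target_mem.2 h₁.target_mem.1.2 h₂.source_mem.1) hz'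

theorem PathIn.strip_until_box (hM : D + tnorm T < M) (hx : x ∈ strip Q D i 0)
    (hbox : x ∉ box Q M) (h : PathIn (configStep T) (band Q D) x π y) :
    PathIn (configStep T) (strip Q D i 0) x π y ∨
      ∃ π₁ π₂, ∃ b ∈ box Q M, π₂.length < π.length ∧
        PathIn (configStep T) (strip Q D i 0) x π₁ b ∧ PathIn (configStep T) (band Q D) b π₂ y := by
  rcases h.inter_or_exists_first_exit (P := {z | z ∉ box Q M}) hbox with
    h | ⟨π₁, t, π₂, c, b, rfl, h₁, ht, hb, h₂⟩
  · exact .inl (h.strip_of_avoids_box hM hx)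
  · have h₁' := h₁.strip_of_avoids_box hM hx
    have hb' := target_mem_strip hM ht h₁'.target_mem h₁.target_mem.2 h₂.source_mem
    refine .inr ⟨π₁ ++ [t], π₂, b, not_not.mp hb, ?_, h₁'.concat ht hb', h₂⟩
    simp only [List.length_append, List.length_cons]
    omega

-- The steps of the path `L` inside the box are the portions between consecutive visits to it.
theorem PathIn.exists_box_path_then_strip (hM : D + tnorm T < M) (hx : x ∈ box Q M)
    (h : PathIn (configStep T) (band Q D) x π y) :
    ∃ L b i π', PathIn (fun z π z' => PathIn (configStep T) (natConfigs 2) z π z' ∧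
        π.length ≤ lowBound (Q.card * (D + 1)) M + 1) (box Q M : Finset (Config 2)) x L b ∧
      PathIn (configStep T) (strip Q D i 0) b π' y := by
  have hT : tnorm T < M := by omega
  induction hn : π.length using Nat.strong_induction_on generalizing π x with
  | _ n ih =>
    subst hn
    cases π with
    | nil =>
      obtain ⟨i, hi⟩ := mem_band_iff.mp h.source_mem
      exact ⟨[], x, i, [], .refl hx, h.1, hi⟩
    | cons t π =>
      obtain ⟨hx_band, c, ht, hπ⟩ := h
      by_cases hc : c ∈ box Q M
      · obtain ⟨L, b, i, π', hL, hπ'⟩ := ih π.length (by simp) hc hπ rfl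
        have hstep : PathIn (configStep T) (natConfigs 2) x [t] c :=
          .cons (fun k => hx_band.2.1 k) ht (.refl fun k => hπ.source_mem.2.1 k)
        exact ⟨[t] :: L, b, i, π', .cons hx ⟨hstep, by simp⟩ hL, hπ'⟩
      obtain ⟨i, hi⟩ := mem_band_iff.mp hπ.source_mem
      have hx_strip := source_mem_strip hM ht hi hc hx_band
      rcases hπ.strip_until_box hM hi hc with hπ | ⟨π₁, π₂, b, hb, hlen, h₁, h₂⟩
      · exact ⟨[], x, i, t :: π, .refl hx, .cons hx_strip ht hπ⟩
      obtain ⟨L, b', i', π', hL, hπ'⟩ :=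
        ih π₂.length (hlen.trans (Nat.lt_succ_self _)) hb h₂ rfl
      obtain ⟨w, hw, hw_len⟩ := (PathIn.cons hx_strip ht h₁).exists_short_strip_path hT
        ((mem_box_iff.mp hx).2 _).2 ((mem_box_iff.mp hb).2 _).2
      exact ⟨w :: L, b', i', π', .cons hx ⟨hw, by omega⟩ hL, hπ'⟩

/-- The bound for schemes covering runs in the band: a cycle on each side of the box and a path
visiting each configuration of the box at most once. -/
def bandBound (n D M : ℕ) : ℕ :=
  2 * (descentBound (n * (D + 1)) M + lowBound (n * (D + 1)) M) +
    n * M ^ 2 * (lowBound (n * (D + 1)) M + 1)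

theorem PathIn.schemeReach_of_source_mem_box (hM : D + tnorm T < M) (hx : x ∈ box Q M)
    (h : PathIn (configStep T) (band Q D) x π y) :
    SchemeReach T 1 (Q.card * M ^ 2 * (lowBound (Q.card * (D + 1)) M + 1) +
      (descentBound (Q.card * (D + 1)) M + lowBound (Q.card * (D + 1)) M)) x y := by
  have hT : tnorm T < M := by omega
  obtain ⟨L, b, i, π', hL, hπ'⟩ := h.exists_box_path_then_strip hM hx
  obtain ⟨L', -, hL', hlen⟩ := hL.exists_sublist_length_lt_card subset_rfl
  rw [card_box] at hlen
  have hbox : ((box Q M : Finset (Config 2)) : Set (Config 2)) ⊆ natConfigs 2 :=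
    fun z hz k => ((mem_box_iff.mp hz).2 k).1
  obtain ⟨hpath, hpath_len⟩ := hL'.flatten_of_bounded_steps hbox
  have htail := hπ'.schemeReach_of_strip_of_source_lt hT
    ((mem_box_iff.mp hL.target_mem).2 _).2
  refine ((SchemeReach.of_path hpath).trans htail).mono le_rfl ?_
  gcongr
  exact hpath_len.trans (Nat.mul_le_mul_right _ hlen.le)

theorem PathIn.schemeReach_of_band (hM : D + tnorm T < M)
    (h : PathIn (configStep T) (band Q D) x π y) :
    SchemeReach T 2 (bandBound Q.card D M) x y := by
  have hT : tnorm T < M := by omega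
  by_cases hx : x ∈ box Q M
  · exact (h.schemeReach_of_source_mem_box hM hx).mono one_le_two (by rw [bandBound]; omega)
  obtain ⟨i, hi⟩ := mem_band_iff.mp h.source_mem
  rcases h.strip_until_box hM hi hx with h | ⟨π₁, π₂, b, hb, -, h₁, h₂⟩
  · exact (h.schemeReach_of_strip hT).mono le_rfl (by rw [bandBound]; omega)
  · exact ((h₁.schemeReach_of_strip_of_target_lt hT ((mem_box_iff.mp hb).2 _).2).trans
      (h₂.schemeReach_of_source_mem_box hM hb)).mono le_rfl (by rw [bandBound]; omega)

end Band

/-! ### Polynomial bounds -/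

section Bounds

variable {X N M n D : ℕ}

theorem add_le_pow_succ {u v k : ℕ} (hX : 2 ≤ X) (hu : u ≤ X ^ k) (hv : v ≤ X ^ k) :
    u + v ≤ X ^ (k + 1) :=
  calc u + v ≤ X ^ k * 2 := by omega
    _ ≤ X ^ k * X := Nat.mul_le_mul_left _ hX
    _ = X ^ (k + 1) := (pow_succ X k).symm

theorem lowBound_lt_pow (hX : 2 ≤ X) (hN : N ≤ X ^ 2) (hM : M ≤ X) : lowBound N M < X ^ 11 := by
  have hceiling : (N * M) ^ 2 * M + 1 ≤ X ^ (7 + 1) := by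
    refine add_le_pow_succ hX ?_ (Nat.one_le_pow _ _ (by omega))
    calc (N * M) ^ 2 * M ≤ (X ^ 2 * X) ^ 2 * X := by gcongr
      _ = X ^ 7 := by ring
  refine add_le_pow_succ (k := 10) hX ?_ (Nat.one_le_pow _ _ (by omega))
  calc lowBound N M ≤ X ^ 2 * X ^ (7 + 1) := Nat.mul_le_mul hN hceiling
    _ = X ^ 10 := by ring

theorem descentBound_le_pow (hX : 2 ≤ X) (hN : N ≤ X ^ 2) (hM : M ≤ X) :
    descentBound N M ≤ X ^ 19 := by
  have hlow := lowBound_lt_pow hX hN hM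
  have hproduct : N * M + 1 ≤ X ^ (3 + 1) := by
    refine add_le_pow_succ hX ?_ (Nat.one_le_pow _ _ (by omega))
    calc N * M ≤ X ^ 2 * X := Nat.mul_le_mul hN hM
      _ = X ^ 3 := by ring
  have hdrops : N * (N * M + 1) * (lowBound N M + 1) ≤ X ^ 17 :=
    calc N * (N * M + 1) * (lowBound N M + 1)
      _ ≤ X ^ 2 * X ^ (3 + 1) * X ^ 11 := Nat.mul_le_mul (Nat.mul_le_mul hN hproduct) hlow
      _ = X ^ 17 := by ring
  have hlow' : lowBound N M ≤ X ^ 17 :=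
    hlow.le.trans (Nat.pow_le_pow_right (by omega) (by norm_num))
  calc descentBound N M ≤ 2 ^ 2 * X ^ 17 := by rw [descentBound]; omega
    _ ≤ X ^ 2 * X ^ 17 := by gcongr
    _ = X ^ 19 := by ring

theorem bandBound_le_pow (hX : 2 ≤ X) (hn : n ≤ X) (hD : D + 1 ≤ X) (hM : M ≤ X) :
    bandBound n D M ≤ X ^ 22 := by
  have hN : n * (D + 1) ≤ X ^ 2 := (Nat.mul_le_mul hn hD).trans_eq (sq X).symm
  have hlow := lowBound_lt_pow hX hN hM
  have hstrip : descentBound (n * (D + 1)) M + lowBound (n * (D + 1)) M ≤ X ^ (19 + 1) :=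
    add_le_pow_succ hX (descentBound_le_pow hX hN hM)
      (hlow.le.trans (Nat.pow_le_pow_right (by omega) (by norm_num)))
  refine add_le_pow_succ (k := 21) hX ?_ ?_
  · rw [two_mul]
    exact add_le_pow_succ hX hstrip hstrip
  · calc n * M ^ 2 * (lowBound (n * (D + 1)) M + 1) ≤ X * X ^ 2 * X ^ 11 := by gcongr; exact hlow
      _ = X ^ 14 := by ring
      _ ≤ X ^ 21 := Nat.pow_le_pow_right (by omega) (by norm_num)

end Bounds

theorem Reach.schemeReach {T : Finset (Trans 2)} {Q : Finset ℕ} (hT : ∀ t ∈ T, t.2.2 ∈ Q) {D : ℕ}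
    {p q : ℕ} (hp : p ∈ Q) {u v : Vec 2} (h : Reach T (LBand D) p u q v) :
    SchemeReach T 2 ((Q.card + tnorm T + D + 2) ^ 22) (p, u) (q, v) := by
  obtain ⟨π, hπ⟩ := h
  have hinv (x : Config 2) (t : Trans 2) (y : Config 2) (ht : configStep T x t y) : y.1 ∈ Q := by
    rw [← ht.1.2.2]
    exact hT t ht.1.1
  have hband : PathIn (configStep T) (band Q D) (p, u) π (q, v) :=
    ((run_iff_pathIn.mp hπ).inter_of_invariant (P := {x : Config 2 | x.1 ∈ Q}) hinv hp).mono
      fun _ hx => ⟨hx.2, hx.1⟩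
  exact (hband.schemeReach_of_band (Nat.lt_succ_self _)).mono le_rfl
    (bandBound_le_pow (by omega) (by omega) (by omega) (by omega))

/-- Proposition on L-shaped bands. Runs of a 2-VASS staying in
the L-shaped band `L` are captured by a finite set of linear path schemes of
polynomial length with at most two cycles. -/
theorem statement8 :
    ∃ c : ℕ, ∀ (Q : Finset ℕ) (T : Finset (Trans 2)),
      (∀ t ∈ T, t.1 ∈ Q ∧ t.2.2 ∈ Q) →
      ∀ D : ℕ,
      ∃ Y : Finset (LPS 2),
        (∀ ρ ∈ Y, ∃ p q, IsLPSFrom T p q ρ) ∧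
        (∀ p ∈ Q, ∀ q ∈ Q, ∀ u v : Vec 2, u ∈ LBand D → v ∈ LBand D →
          Reach T (LBand D) p u q v → SReach T Y (NatSet 2) p u q v) ∧
        (∀ ρ ∈ Y, lpsLen ρ ≤ (Q.card + tnorm T + D + 2) ^ c) ∧
        (∀ ρ ∈ Y, numCycles ρ ≤ 2) := by
  refine ⟨22, fun Q T hT D => ?_⟩
  set K := (Q.card + tnorm T + D + 2) ^ 22
  have hfin := finite_setOf_lps T 2 K
  refine ⟨hfin.toFinset, fun ρ hρ => ?_, fun p hp q _ u v _ _ h => ?_, fun ρ hρ => ?_,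
    fun ρ hρ => ?_⟩
  · exact (hfin.mem_toFinset.mp hρ).1
  · obtain ⟨ρ, hρ, hcycles, hlen, π, hlang, hπ⟩ := h.schemeReach (fun t ht => (hT t ht).2) hp
    exact ⟨ρ, hfin.mem_toFinset.mpr ⟨⟨p, q, hρ⟩, hlen, hcycles⟩, π, hlang, run_iff_pathIn.mpr hπ⟩
  · exact (hfin.mem_toFinset.mp hρ).2.1
  · exact (hfin.mem_toFinset.mp hρ).2.2

end VASS
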